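/- Let p be a prime, r ∈ ℕ_{≥1}, R = ℤ/p^rℤ, and fix a matrix A ∈ M₂(R). For u ∈ R and n ≥ 3 set π_{u,n} := |{(c₁, …, cₙ) ∈ Rⁿ : [c₁, …, cₙ] = A and c₂ = u}|, and set τ_n := Σ_{u ∈ R^×} π_{u,n}. Then for all n ≥ 5: τ_n = (p^r − p^{r−1})·τ_{n−1} + p^{2r−1}·τ_{n−2}. -/

import Mathlib

open Matrix

/-- `η(a)` is the matrix `![![a, -1], ![1, 0]]`. -/
def eta {R : Type*} [CommRing R] (a : R) : Matrix (Fin 2) (Fin 2) R := !![a, -1; 1, 0]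

/-- `[c₁, …, cₙ] = η(c₁)·η(c₂)⋯η(cₙ)`. -/
def prodEta {R : Type*} [CommRing R] {n : ℕ} (c : Fin n → R) : Matrix (Fin 2) (Fin 2) R :=
  (List.ofFn fun i => eta (c i)).prod


/-- Inverse of `eta`. -/
def etaInv {R : Type*} [CommRing R] (a : R) : Matrix (Fin 2) (Fin 2) R := !![0, 1; -1, a]

/-- Diagonal matrix `diag(u, 1/u)`. -/
def DD {R : Type*} [CommRing R] (u : Rˣ) : Matrix (Fin 2) (Fin 2) R :=
  !![(u : R), 0; 0, ((u⁻¹ : Rˣ) : R)]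

/-- Counting function. -/
def NN {R : Type*} [CommRing R] [Fintype R] [DecidableEq R] :
    ℕ → Matrix (Fin 2) (Fin 2) R → ℕ
  | 0, B => if B = 1 then 1 else 0
  | (k+1), B => ∑ c : R, NN k (etaInv c * B)

/-- Counting function up to diagonal matrices. -/
def SS {R : Type*} [CommRing R] [Fintype R] [DecidableEq R]
    (m : ℕ) (B : Matrix (Fin 2) (Fin 2) R) : ℕ := ∑ u : Rˣ, NN m (DD u * B)

section aux
variable {R : Type*} [CommRing R]

lemma eta_mul_eq (a : R) (B C : Matrix (Fin 2) (Fin 2) R) :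
    eta a * B = C ↔ B = etaInv a * C := by
  have h1 : eta a * etaInv a = 1 := by
    ext i j; fin_cases i <;> fin_cases j <;> simp [eta, etaInv]
  have h2 : etaInv a * eta a = 1 := by
    ext i j; fin_cases i <;> fin_cases j <;> simp [eta, etaInv]
  constructor
  · rintro rfl; rw [← mul_assoc, h2, one_mul]
  · rintro rfl; rw [← mul_assoc, h1, one_mul]

lemma DD_mul (u v : Rˣ) : DD u * DD v = DD (u * v) := by
  ext i j; fin_cases i <;> fin_cases j <;> simp [DD, mul_comm]

lemma etaInv_DD (c : R) (u : Rˣ) :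
    etaInv c * DD u = DD u⁻¹ * etaInv (((u⁻¹ * u⁻¹ : Rˣ) : R) * c) := by
  ext i j; fin_cases i <;> fin_cases j <;> simp [DD, etaInv, mul_comm]
  have h := u.mul_inv
  linear_combination (-c * ((u⁻¹ : Rˣ) : R)) * h

lemma key_unit (a b : R) (u : Rˣ) :
    etaInv b * etaInv (u : R) * etaInv a
      = etaInv (b - ((u⁻¹ : Rˣ) : R)) * DD u⁻¹ * etaInv (a - ((u⁻¹ : Rˣ) : R)) := by
  have h := u.mul_inv
  ext i j; fin_cases i <;> fin_cases j <;> simp [DD, etaInv] <;> grind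

lemma key_nonunit (a x b d : R) (w : Rˣ) (hw : (w : R) = x * b - 1) :
    etaInv d * etaInv b * etaInv x * etaInv a
      = etaInv (d - x * ((w⁻¹ : Rˣ) : R)) * DD w⁻¹ * etaInv (a - b * ((w⁻¹ : Rˣ) : R)) := by
  have h := w.mul_inv
  ext i j; fin_cases i <;> fin_cases j <;> simp [DD, etaInv] <;> grind

variable [Fintype R] [DecidableEq R]

lemma SS_DD (m : ℕ) (v : Rˣ) (B : Matrix (Fin 2) (Fin 2) R) : SS m (DD v * B) = SS m B := by
  unfold SS
  rw [← Equiv.sum_comp (Equiv.mulRight v) (fun u => NN m (DD u * B))]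
  refine Finset.sum_congr rfl fun u _ => ?_
  rw [← mul_assoc, DD_mul]; rfl

lemma SS_succ (m : ℕ) (B : Matrix (Fin 2) (Fin 2) R) :
    SS (m + 1) B = ∑ c : R, SS m (etaInv c * B) := by
  unfold SS
  rw [Finset.sum_comm, ← Equiv.sum_comp (Equiv.inv Rˣ)]
  refine Finset.sum_congr rfl fun u _ => ?_
  rw [NN, ← Equiv.sum_comp (Units.mulLeft (u⁻¹ * u⁻¹))]
  refine Finset.sum_congr rfl fun c _ => ?_
  rw [← mul_assoc, etaInv_DD, mul_assoc]
  simp [Units.mulLeft, ← mul_assoc]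

lemma sum_NN (k : ℕ) (A : Matrix (Fin 2) (Fin 2) R) :
    ∑ u : Rˣ, ∑ a : R, ∑ b : R, NN k (etaInv b * (etaInv (u : R) * (etaInv a * A)))
      = SS (k + 2) A := by
  rw [SS_succ]
  simp only [SS, NN]
  rw [Finset.sum_comm (s := (Finset.univ : Finset R)), ← Equiv.sum_comp (Equiv.inv Rˣ) (fun u => ∑ a : R, ∑ b : R, NN k (etaInv b * (DD u * (etaInv a * A))))]
  refine Finset.sum_congr rfl fun u _ => ?_
  rw [← Equiv.sum_comp (Equiv.addRight (((u⁻¹ : Rˣ) : R)))]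
  refine Finset.sum_congr rfl fun a _ => ?_
  rw [← Equiv.sum_comp (Equiv.addRight (((u⁻¹ : Rˣ) : R)))]
  refine Finset.sum_congr rfl fun b _ => ?_
  have := key_unit (a + ((u⁻¹ : Rˣ) : R)) (b + ((u⁻¹ : Rˣ) : R)) u
  simp only [add_sub_cancel_right] at this
  simp only [← mul_assoc, Equiv.coe_addRight, Equiv.inv_apply, this]

lemma SS_two (k : ℕ) (u : Rˣ) (s t : R) (A : Matrix (Fin 2) (Fin 2) R) :
    ∑ a : R, ∑ b : R, SS k (etaInv (b - s) * (DD u * (etaInv (a - t) * A)))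
      = SS (k + 2) A := by
  rw [SS_succ (k + 1), ← Equiv.sum_comp (Equiv.subRight t) (fun a => SS (k + 1) (etaInv a * A))]
  refine Finset.sum_congr rfl fun a _ => ?_
  rw [← SS_DD _ u, SS_succ, 
    ← Equiv.sum_comp (Equiv.subRight s) (fun b => SS k (etaInv b * _))]
  simp only [Equiv.subRight_apply]

lemma SS_rec (hloc : ∀ x b : R, ¬ IsUnit x → IsUnit (x * b - 1)) (k : ℕ)
    (A : Matrix (Fin 2) (Fin 2) R) :
    SS (k + 4) A = Fintype.card Rˣ * SS (k + 3) A +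
      (Fintype.card R - Fintype.card Rˣ) * Fintype.card R * SS (k + 2) A := by
  classical
  have h1 : SS (k + 4) A = ∑ x : R, ∑ a : R, ∑ b : R,
      SS (k + 1) (etaInv b * (etaInv x * (etaInv a * A))) := by
    rw [Finset.sum_comm, SS_succ]
    refine Finset.sum_congr rfl fun a _ => ?_
    rw [SS_succ]
    refine Finset.sum_congr rfl fun a _ => ?_
    rw [SS_succ]
  have h2 : ∀ x : R, ∑ a : R, ∑ b : R,
      SS (k + 1) (etaInv b * (etaInv x * (etaInv a * A))) =
      if IsUnit x then SS (k + 3) A else Fintype.card R * SS (k + 2) A := by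
    intro x
    split_ifs with hx
    · obtain ⟨u, rfl⟩ := hx
      rw [← SS_two (k + 1) u⁻¹ ((u⁻¹ : Rˣ) : R) ((u⁻¹ : Rˣ) : R)]
      refine Finset.sum_congr rfl fun a _ => Finset.sum_congr rfl fun b _ => ?_
      have := key_unit a b u
      simp only [← mul_assoc, this]
    · rw [Finset.sum_comm, ← smul_eq_mul, ← Finset.card_univ, ← Finset.sum_const]
      refine Finset.sum_congr rfl fun b _ => ?_
      obtain ⟨w, hw⟩ := hloc x b hx
      rw [← SS_two k w⁻¹ (x * ((w⁻¹ : Rˣ) : R)) (b * ((w⁻¹ : Rˣ) : R))]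
      refine Finset.sum_congr rfl fun a _ => ?_
      rw [SS_succ]
      refine Finset.sum_congr rfl fun d _ => ?_
      have := key_nonunit a x b d w hw
      simp only [← mul_assoc, this]
  have h3 : (Finset.univ.filter fun x : R => IsUnit x).card = Fintype.card Rˣ := by
    rw [← Finset.card_univ, ← Finset.card_image_of_injective _ (Units.val_injective (α := R))]
    congr 1
    ext x
    simp only [Finset.mem_filter, Finset.mem_univ, true_and, Finset.mem_image]
    rfl
  have h4 : (Finset.univ.filter fun x : R => ¬ IsUnit x).card
      = Fintype.card R - Fintype.card Rˣ := by
    have := Finset.card_filter_add_card_filter_not (s := (Finset.univ : Finset R)) (fun x : R => IsUnit x)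
    rw [h3, Finset.card_univ] at this
    omega
  rw [h1, Finset.sum_congr rfl fun x _ => h2 x, Finset.sum_ite, Finset.sum_const,
    Finset.sum_const, h3, h4]
  simp [mul_assoc]

lemma prodEta_cons {k : ℕ} (a : R) (c : Fin k → R) :
    prodEta (Fin.cons a c : Fin (k + 1) → R) = eta a * prodEta c := by
  simp [prodEta, List.ofFn_succ]

lemma sum_cons {k : ℕ} (f : (Fin (k + 1) → R) → ℕ) :
    ∑ c, f c = ∑ a : R, ∑ c : Fin k → R, f (Fin.cons a c) := by
  rw [← Equiv.sum_comp (Fin.consEquiv (fun _ => R)), Fintype.sum_prod_type]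
  rfl

lemma NN_eq (k : ℕ) (B : Matrix (Fin 2) (Fin 2) R) :
    ∑ c : Fin k → R, (if prodEta c = B then 1 else 0) = NN k B := by
  induction k generalizing B with
  | zero => simp [NN, prodEta, eq_comm]
  | succ k ih =>
    rw [sum_cons, NN]
    refine Finset.sum_congr rfl fun a _ => ?_
    rw [← ih]
    simp only [prodEta_cons, eta_mul_eq]

lemma tau_eq (k : ℕ) (A : Matrix (Fin 2) (Fin 2) R) :
    ∑ u : Rˣ, Nat.card {c : Fin (k + 3) → R // prodEta c = A ∧ c ⟨1, by omega⟩ = (u : R)}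
      = SS (k + 2) A := by
  rw [← sum_NN]
  refine Finset.sum_congr rfl fun u _ => ?_
  rw [Nat.card_eq_fintype_card, Fintype.card_subtype, Finset.card_filter, sum_cons]
  refine Finset.sum_congr rfl fun a _ => ?_
  rw [sum_cons, Finset.sum_eq_single (u : R)]
  · have : ∀ c : Fin (k + 1) → R,
        (Fin.cons a (Fin.cons (u : R) c : Fin (k + 2) → R) : Fin (k + 3) → R) ⟨1, by omega⟩ = u :=
      fun c => rfl
    simp only [this, and_true, prodEta_cons, eta_mul_eq]
    rw [NN_eq, NN]
  · intro b _ hb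
    refine Finset.sum_eq_zero fun c _ => ?_
    rw [if_neg]
    rintro ⟨-, h⟩
    exact hb h
  · simp

end aux

lemma zmod_loc (p r : ℕ) (hp : p.Prime) (hr : 1 ≤ r) [NeZero (p ^ r)]
    (x b : ZMod (p ^ r)) (hx : ¬ IsUnit x) : IsUnit (x * b - 1) := by
  have hn : IsNilpotent x := by
    obtain ⟨m, rfl⟩ := ZMod.natCast_zmod_surjective x
    rw [ZMod.isUnit_iff_coprime, Nat.coprime_pow_right_iff hr, Nat.coprime_comm,
      hp.coprime_iff_not_dvd, not_not] at hx
    refine ⟨r, ?_⟩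
    rw [← Nat.cast_pow, ZMod.natCast_eq_zero_iff]
    exact pow_dvd_pow_of_dvd hx r
  have : IsNilpotent (x * b) := Commute.isNilpotent_mul_right (Commute.all _ _) hn
  exact this.isUnit_sub_one

/-- For `R = ℤ/p^rℤ`, a fixed matrix `A`, `π_{u,n}` the number of tuples
`(c₁, …, cₙ) ∈ Rⁿ` with `[c₁, …, cₙ] = A` and `c₂ = u`, and `τ_n := Σ_{u ∈ R^×} π_{u,n}`:
for `n ≥ 5`, `τ_n = (p^r - p^(r-1))·τ_{n-1} + p^(2r-1)·τ_{n-2}`. -/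
theorem stmt19 (p r : ℕ) (hp : p.Prime) (hr : 1 ≤ r) [NeZero (p ^ r)]
    (A : Matrix (Fin 2) (Fin 2) (ZMod (p ^ r))) (n : ℕ) (hn : 5 ≤ n) :
    (∑ u : (ZMod (p ^ r))ˣ,
        Nat.card {c : Fin n → ZMod (p ^ r) // prodEta c = A ∧ c ⟨1, by omega⟩ = (u : ZMod (p ^ r))}) =
      (p ^ r - p ^ (r - 1)) *
        (∑ u : (ZMod (p ^ r))ˣ,
          Nat.card {c : Fin (n - 1) → ZMod (p ^ r) //
            prodEta c = A ∧ c ⟨1, by omega⟩ = (u : ZMod (p ^ r))}) +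
      p ^ (2 * r - 1) *
        (∑ u : (ZMod (p ^ r))ˣ,
          Nat.card {c : Fin (n - 2) → ZMod (p ^ r) //
            prodEta c = A ∧ c ⟨1, by omega⟩ = (u : ZMod (p ^ r))}) := by
  obtain ⟨k, rfl⟩ := Nat.exists_eq_add_of_le' hn
  have e1 := tau_eq (k + 2) A
  have e2 := tau_eq (k + 1) A
  have e3 := tau_eq k A
  refine e1.trans ?_
  refine (SS_rec (zmod_loc p r hp hr) k A).trans ?_
  have c1 : Fintype.card (ZMod (p ^ r))ˣ = p ^ r - p ^ (r - 1) := by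
    rw [ZMod.card_units_eq_totient, Nat.totient_prime_pow hp (by omega), Nat.mul_sub, mul_one,
      ← pow_succ, Nat.sub_add_cancel hr]
  have c2 : p ^ (r - 1) ≤ p ^ r := Nat.pow_le_pow_right hp.pos (by omega)
  rw [c1, ZMod.card, Nat.sub_sub_self c2, ← pow_add, show r - 1 + r = 2 * r - 1 by omega]
  exact congrArg₂ (· + ·) (congrArg _ e2.symm) (congrArg _ e3.symm)
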